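/- Fix a rank n ≥ 1 and an integer c ≥ 1, and set L := (0,…,0,c) ∈ ℕ^n. Let J ∈ ℕ^n with |J| ≤ c, and let I, K ∈ ℕ^n satisfy K_i = I_i + J_i for 1 ≤ i ≤ n-1 and K_n = I_n + J_n - c ≥ 0. Then the fused vertex weight of level c satisfies 𝓛^{J,L}_{I,K}(x, c) = t^{c(c-1)/2} · (t;t)_{c - J_n} · C(I_n, c - J_n)_t · x^c = t^{c(c-1)/2} · ((t;t)_{I_n} / (t;t)_{K_n}) · x^c. -/

import Mathlib

/-!
Since the outgoing content is `(0,…,0,c)`, the only outgoing word is `ℓ = (n,…,n)`.  Along it, the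
`s`-th vertex (counting from `0`) has weight `t^s x` when `j_s = n` and
`t^s x (1 - t^{I_n^s})` when `j_s < n`; in the first case the occupation `I_n` is unchanged and in
the second it drops by one.  Hence the product of the weights is
`t^{c(c-1)/2} x^c ∏_{i < c - J_n} (1 - t^{I_n - i})` for *every* incoming word `j` of content `J`
(`Pprod_const`).  The sum over `j` of `t^{-𝓘}` therefore factors out and cancels the normalization
`C_c(J)`, which is nonzero because it is a nonempty sum (`wrd_nonempty`, using `|J| ≤ c`) of
powers of `t` (`CJq_ne_zero`).  The falling product is rewritten as a Gaussian binomial times a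
Pochhammer symbol through the `t`-Pascal recursion (`gaussNat_mul_pochh`), and as a quotient of
Pochhammer symbols by `fall_mul_pochh`.
-/

open Finset

noncomputable section

attribute [local instance] Classical.propDecidable

/-- The Gaussian binomial coefficient `C(a,b)_t` for natural arguments,
as a polynomial in `t` (it vanishes when `b > a`). -/
def gaussNat : ℕ → ℕ → Polynomial ℤ
  | _, 0 => 1
  | 0, _ + 1 => 0
  | a + 1, b + 1 => gaussNat a b + Polynomial.X ^ (b + 1) * gaussNat a (b + 1)

/-- The Gaussian binomial coefficient `C(a,b)_t ∈ ℤ[t]`, set to `0` unless `a ≥ b ≥ 0`. -/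
def gaussInt (a b : ℤ) : Polynomial ℤ :=
  if 0 ≤ b ∧ b ≤ a then gaussNat a.toNat b.toNat else 0

/-- The t-Pochhammer symbol `(w;t)_k = ∏_{i=0}^{k-1} (1 - w tⁱ)`. -/
def pochh {R : Type*} [CommRing R] (w t : R) (k : ℕ) : R :=
  ∏ i ∈ Finset.range k, (1 - w * t ^ i)

/-- The words in `{0,…,n}^M` with content `J`. -/
def wrd (n M : ℕ) (J : ℕ → ℕ) : Finset (Fin M → ℕ) :=
  (Fintype.piFinset fun _ : Fin M => Finset.range (n + 1)).filter fun w =>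
    ∀ a ∈ Finset.Icc 1 n, (Finset.univ.filter fun s => w s = a).card = J a

/-- The inversion number `𝓘(w) = #{(a,b) : a < b, w_a < w_b}`. -/
def invNum (M : ℕ) (w : Fin M → ℕ) : ℕ :=
  (Finset.univ.filter fun p : Fin M × Fin M => p.1 < p.2 ∧ w p.1 < w p.2).card

/-- The reversed word `rev(w) = (w_M, …, w_1)`. -/
def wrev (M : ℕ) (w : Fin M → ℕ) : Fin M → ℕ := fun s => w s.rev

/-- The intermediate occupation vector `I^s = I + ∑_{r ≤ s} (e_{j_r} - e_{ℓ_r})`. -/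
def Istep (M : ℕ) (I : ℕ → ℕ) (j l : Fin M → ℕ) (s a : ℕ) : ℤ :=
  (I a : ℤ) + ∑ r : Fin M,
    (if (r : ℕ) < s then
      ((if a = j r then 1 else 0) - (if a = l r then 1 else 0)) else 0)

/-- The vertex weight `L^{j,i}_{I,K}(x)`.  Here `tpow m` represents `t^m`. -/
def Lw {R : Type*} [CommRing R] (tpow : ℤ → R) (n : ℕ) (Ib It : ℕ → ℤ) (j i : ℕ)
    (xv : R) : R :=
  if ∀ a ∈ Finset.Icc 1 n,
      Ib a + (if a = j then 1 else 0) = It a + (if a = i then 1 else 0) then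
    if i = 0 then 1
    else if j = i then xv * tpow (∑ a ∈ Finset.Icc (i + 1) n, Ib a)
    else if j < i then xv * (1 - tpow (Ib i)) * tpow (∑ a ∈ Finset.Icc (i + 1) n, Ib a)
    else 0
  else 0

/-- `Π(j, ℓ; I, K; x) = ∏_{s=1}^M L^{j_s,ℓ_s}_{I^{s-1},I^s}(t^{s-1} x)`, which is `0`
unless every `I^s` lies in `ℕ^n` and `I^M = K`. -/
def Pprod {R : Type*} [CommRing R] (tpow : ℤ → R) (n M : ℕ) (j l : Fin M → ℕ)
    (I K : ℕ → ℕ) (xv : R) : R :=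
  if (∀ s ∈ Finset.range (M + 1), ∀ a ∈ Finset.Icc 1 n, 0 ≤ Istep M I j l s a) ∧
      (∀ a ∈ Finset.Icc 1 n, Istep M I j l M a = (K a : ℤ)) then
    ∏ s : Fin M,
      Lw tpow n (Istep M I j l s) (Istep M I j l ((s : ℕ) + 1)) (j s) (l s)
        (tpow (s : ℕ) * xv)
  else 0

/-- The Gaussian binomial coefficient as an element of `ℚ(t)`. -/
def gq (a b : ℤ) : RatFunc ℚ :=
  algebraMap (Polynomial ℚ) (RatFunc ℚ) ((gaussInt a b).map (Int.castRingHom ℚ))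

/-- `t^m` as a constant of `ℚ(t)[x]`. -/
def tpowP (m : ℤ) : Polynomial (RatFunc ℚ) := Polynomial.C ((RatFunc.X : RatFunc ℚ) ^ m)

/-- The normalization `C_M(J) = ∑_{j : m(j) = J} t^{-𝓘(rev j)} ∈ ℚ(t)`. -/
def CJq (n M : ℕ) (J : ℕ → ℕ) : RatFunc ℚ :=
  ∑ j ∈ wrd n M J, (RatFunc.X : RatFunc ℚ) ^ (-(invNum M (wrev M j) : ℤ))

/-- The fused vertex weight `𝓛^{J,L}_{I,K}(x, M) ∈ ℚ(t)[x]`, with spectral parameter `xv`. -/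
def Lfused (n M : ℕ) (J L I K : ℕ → ℕ) (xv : Polynomial (RatFunc ℚ)) :
    Polynomial (RatFunc ℚ) :=
  Polynomial.C (CJq n M J)⁻¹ *
    ∑ j ∈ wrd n M J, ∑ l ∈ wrd n M L,
      Polynomial.C ((RatFunc.X : RatFunc ℚ) ^ (-(invNum M (wrev M j) : ℤ))) *
        Pprod tpowP n M j l I K xv

/-! ### Falling products, Pochhammer symbols and Gaussian binomials -/

/-- The falling product `∏_{i < k} (1 - t^{a-i})`.  With truncated subtraction it vanishes for
`k > a`, as it should. -/
def fall {R : Type*} [CommRing R] (t : R) (a k : ℕ) : R :=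
  ∏ i ∈ Finset.range k, (1 - t ^ (a - i))

lemma fall_succ {R : Type*} [CommRing R] (t : R) (a k : ℕ) :
    fall t a (k + 1) = fall t a k * (1 - t ^ (a - k)) := by
  simp [fall, Finset.prod_range_succ]

lemma fall_succ_succ {R : Type*} [CommRing R] (t : R) (a k : ℕ) :
    fall t (a + 1) (k + 1) = fall t a k * (1 - t ^ (a + 1)) := by
  simp [fall, Finset.prod_range_succ']

lemma fall_eq_zero {R : Type*} [CommRing R] (t : R) {a k : ℕ} (h : a < k) : fall t a k = 0 :=
  Finset.prod_eq_zero (Finset.mem_range.2 h) (by simp)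

lemma pochh_succ {R : Type*} [CommRing R] (t : R) (k : ℕ) :
    pochh t t (k + 1) = pochh t t k * (1 - t ^ (k + 1)) := by
  simp [pochh, Finset.prod_range_succ, pow_succ']

lemma fall_mul_pochh {R : Type*} [CommRing R] (t : R) (a k : ℕ) (h : k ≤ a) :
    fall t a k * pochh t t (a - k) = pochh t t a := by
  induction k with
  | zero => simp [fall]
  | succ k ih =>
    rw [← ih (by omega), fall_succ]
    obtain ⟨m, hm⟩ : ∃ m, a - k = m + 1 := ⟨a - k - 1, by omega⟩
    rw [hm, pochh_succ, show a - (k + 1) = m by omega]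
    ring

/-- The product formula for the Gaussian binomials, from the `t`-Pascal recursion. -/
lemma gaussNat_mul_pochh {R : Type*} [CommRing R] (φ : Polynomial ℤ →+* R) (a b : ℕ) :
    pochh (φ Polynomial.X) (φ Polynomial.X) b * φ (gaussNat a b) =
      fall (φ Polynomial.X) a b := by
  induction a generalizing b with
  | zero =>
    cases b with
    | zero => simp [gaussNat, pochh, fall]
    | succ b => rw [fall_eq_zero _ (Nat.succ_pos b)]; simp [gaussNat]
  | succ a ih =>
    cases b with
    | zero => simp [gaussNat, pochh, fall]
    | succ b =>
      have h1 := ih b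
      have h2 := ih (b + 1)
      rw [fall_succ] at h2
      rw [gaussNat, map_add, map_mul, map_pow, fall_succ_succ, mul_add,
        mul_left_comm _ (φ Polynomial.X ^ (b + 1)), h2, pochh_succ, mul_right_comm, h1]
      rcases Nat.lt_or_ge a b with h | h
      · simp [fall_eq_zero _ h]
      · have : (φ Polynomial.X) ^ (a + 1) =
            (φ Polynomial.X) ^ (b + 1) * (φ Polynomial.X) ^ (a - b) := by
          rw [← pow_add]; congr 1; omega
        rw [this]; ring

lemma pochh_X_ne_zero (k : ℕ) : pochh (RatFunc.X : RatFunc ℚ) RatFunc.X k ≠ 0 := by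
  refine Finset.prod_ne_zero_iff.2 fun i _ h => ?_
  have h1 : (algebraMap (Polynomial ℚ) (RatFunc ℚ)) (Polynomial.X ^ (i + 1)) =
      algebraMap (Polynomial ℚ) (RatFunc ℚ) 1 := by
    rw [map_pow, RatFunc.algebraMap_X, map_one, pow_succ']
    exact (sub_eq_zero.1 h).symm
  have h2 := congrArg Polynomial.natDegree (RatFunc.algebraMap_injective ℚ h1)
  simp at h2

/-! ### Words -/

lemma mem_wrd (n M : ℕ) (J : ℕ → ℕ) (w : Fin M → ℕ) :
    w ∈ wrd n M J ↔ (∀ s, w s ≤ n) ∧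
      ∀ a ∈ Finset.Icc 1 n, (Finset.univ.filter fun s => w s = a).card = J a := by
  simp [wrd, Fintype.mem_piFinset]

lemma wrd_nonempty (n c : ℕ) (J : ℕ → ℕ) (hJ : ∑ a ∈ Finset.Icc 1 n, J a ≤ c) :
    (wrd n c J).Nonempty := by
  set m : Multiset ℕ := (∑ a ∈ Finset.Icc 1 n, Multiset.replicate (J a) a) +
    Multiset.replicate (c - ∑ a ∈ Finset.Icc 1 n, J a) 0 with hm
  have hcard : m.toList.length = c := by
    rw [Multiset.length_toList, hm, Multiset.card_add, Multiset.card_sum]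
    simp only [Multiset.card_replicate]
    omega
  obtain ⟨w, hw⟩ : ∃ w : Fin c → ℕ, (Finset.univ.val.map w : Multiset ℕ) = m := by
    clear_value m
    subst hcard
    exact ⟨m.toList.get, by rw [Fin.univ_val_map, List.ofFn_get, Multiset.coe_toList]⟩
  refine ⟨w, (mem_wrd n c J w).2 ⟨fun s => ?_, fun a ha => ?_⟩⟩
  · have : w s ∈ m := hw ▸ Multiset.mem_map_of_mem w (Finset.mem_univ s)
    rw [hm, Multiset.mem_add, Multiset.mem_sum] at this
    rcases this with ⟨a, ha, h⟩ | h
    · have := Multiset.eq_of_mem_replicate h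
      have := Finset.mem_Icc.1 ha
      omega
    · have := Multiset.eq_of_mem_replicate h
      omega
  · have h1 : Multiset.count a (Finset.univ.val.map w) = J a := by
      have := Finset.mem_Icc.1 ha
      rw [hw, hm, Multiset.count_add, Multiset.count_sum']
      simp only [Multiset.count_replicate]
      rw [Finset.sum_eq_single_of_mem a ha (by intro b _ hb; simp [hb])]
      simp; omega
    rw [← h1, Multiset.count_map]
    simp only [Finset.card_def, Finset.filter_val, eq_comm]

/-- The only word of content `(0,…,0,c)` and length `c` is `(n,…,n)`. -/
lemma wrd_last (n c : ℕ) (hn : 1 ≤ n) :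
    wrd n c (fun a => if a = n then c else 0) = {fun _ => n} := by
  ext w
  rw [mem_wrd, Finset.mem_singleton]
  constructor
  · rintro ⟨_, h⟩
    have h1 := h n (Finset.mem_Icc.2 ⟨hn, le_rfl⟩)
    simp only [if_true] at h1
    have h2 : (Finset.univ.filter fun s => w s = n) = Finset.univ :=
      Finset.eq_univ_of_card _ (by simpa using h1)
    funext s
    exact Finset.filter_eq_self.1 h2 s (Finset.mem_univ s)
  · rintro rfl
    refine ⟨fun _ => le_rfl, fun a _ => ?_⟩
    by_cases h : a = n
    · simp [h]
    · simp [h, Ne.symm h]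

/-- After clearing denominators, `C_M(J)` becomes a polynomial whose value at `t = 1` is the number
of words. -/
lemma CJq_ne_zero (n c : ℕ) (J : ℕ → ℕ) (h : (wrd n c J).Nonempty) : CJq n c J ≠ 0 := by
  intro h0
  set N := ∑ j ∈ wrd n c J, invNum c (wrev c j)
  have h1 : algebraMap (Polynomial ℚ) (RatFunc ℚ)
      (∑ j ∈ wrd n c J, Polynomial.X ^ (N - invNum c (wrev c j))) =
      RatFunc.X ^ N * CJq n c J := by
    rw [CJq, map_sum, Finset.mul_sum]
    refine Finset.sum_congr rfl fun j hj => ?_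
    have hle : invNum c (wrev c j) ≤ N :=
      Finset.single_le_sum (f := fun j => invNum c (wrev c j)) (fun _ _ => Nat.zero_le _) hj
    rw [map_pow, RatFunc.algebraMap_X, pow_sub₀ _ RatFunc.X_ne_zero hle, zpow_neg, zpow_natCast]
  rw [h0, mul_zero, map_eq_zero_iff _ (RatFunc.algebraMap_injective ℚ)] at h1
  have h2 := congrArg (Polynomial.eval 1) h1
  rw [Polynomial.eval_finsetSum] at h2
  simp at h2
  exact h.ne_empty h2

/-! ### Occupation vectors and the constancy of the column weight -/

lemma Istep_succ (M : ℕ) (I : ℕ → ℕ) (j l : Fin M → ℕ) (s : Fin M) (a : ℕ) :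
    Istep M I j l ((s : ℕ) + 1) a = Istep M I j l s a +
      ((if a = j s then 1 else 0) - (if a = l s then 1 else 0)) := by
  have key : ∀ r : Fin M, (if (r : ℕ) < (s : ℕ) + 1 then
      ((if a = j r then (1 : ℤ) else 0) - (if a = l r then 1 else 0)) else 0) =
      (if (r : ℕ) < s then
      ((if a = j r then 1 else 0) - (if a = l r then 1 else 0)) else 0) +
      (if r = s then ((if a = j s then 1 else 0) - (if a = l s then 1 else 0)) else 0) := by
    intro r
    rcases lt_trichotomy r s with h | h | h
    · have h' : (r : ℕ) < s := h
      simp [h.ne, h', Nat.lt_succ_of_lt h']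
    · subst h; simp
    · have h' : (s : ℕ) < r := h
      simp [h.ne', show ¬ (r : ℕ) < s by omega, show ¬ (r : ℕ) < (s : ℕ) + 1 by omega]
  unfold Istep
  rw [Finset.sum_congr rfl fun r _ => key r, Finset.sum_add_distrib, add_assoc]
  congr 2
  simp

lemma Istep_last (M : ℕ) (I : ℕ → ℕ) (j l : Fin M → ℕ) (a : ℕ) :
    Istep M I j l M a = (I a : ℤ) + (Finset.univ.filter fun s => j s = a).card -
      (Finset.univ.filter fun s => l s = a).card := by
  unfold Istep
  simp only [Fin.is_lt, if_true, Finset.sum_sub_distrib, Finset.sum_boole, eq_comm (a := a)]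
  ring

/-- The number of positions among the first `s` of the word `j` whose letter is not `n`. -/
def nonTop (n M : ℕ) (j : Fin M → ℕ) (s : ℕ) : ℕ :=
  (Finset.univ.filter fun r : Fin M => (r : ℕ) < s ∧ j r ≠ n).card

lemma nonTop_succ (n M : ℕ) (j : Fin M → ℕ) (s : Fin M) :
    nonTop n M j ((s : ℕ) + 1) = nonTop n M j s + if j s = n then 0 else 1 := by
  unfold nonTop
  by_cases h : j s = n
  · rw [if_pos h, add_zero]
    congr 1
    ext r
    simp only [Finset.mem_filter, Finset.mem_univ, true_and]
    refine ⟨fun ⟨h1, h2⟩ => ⟨?_, h2⟩, fun ⟨h1, h2⟩ => ⟨by omega, h2⟩⟩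
    have : (r : ℕ) ≠ s := fun e => h2 (by rw [Fin.ext e, h])
    omega
  · rw [if_neg h, ← Finset.card_insert_of_notMem (a := s) (by simp)]
    congr 1
    ext r
    simp only [Finset.mem_filter, Finset.mem_univ, true_and, Finset.mem_insert, Fin.ext_iff]
    constructor
    · rintro ⟨h1, h2⟩
      by_cases e : (r : ℕ) = s
      · exact Or.inl e
      · exact Or.inr ⟨by omega, h2⟩
    · rintro (e | ⟨h1, h2⟩)
      · exact ⟨by omega, by rwa [Fin.ext e]⟩
      · exact ⟨by omega, h2⟩

lemma nonTop_mono (n M : ℕ) (j : Fin M → ℕ) {s u : ℕ} (h : s ≤ u) :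
    nonTop n M j s ≤ nonTop n M j u := by
  refine Finset.card_le_card fun r hr => ?_
  simp only [Finset.mem_filter, Finset.mem_univ, true_and] at hr ⊢
  exact ⟨by omega, hr.2⟩

lemma Istep_top (n M : ℕ) (I : ℕ → ℕ) (j : Fin M → ℕ) (s : ℕ) (hs : s ≤ M) :
    Istep M I j (fun _ => n) s n = (I n : ℤ) - nonTop n M j s := by
  induction s with
  | zero => simp [Istep, nonTop]
  | succ s ih =>
    have h1 := Istep_succ M I j (fun _ => n) ⟨s, hs⟩ n
    have h2 := nonTop_succ n M j ⟨s, hs⟩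
    simp only at h1 h2
    rw [h1, h2, ih (by omega)]
    by_cases h : j ⟨s, hs⟩ = n
    · simp [h]
    · simp [h, Ne.symm h]; ring

/-- Each letter other than `n` contributes the next factor of the falling product. -/
lemma prod_nonTop {R : Type*} [CommRing R] (t : R) (n M : ℕ) (j : Fin M → ℕ) (A : ℕ) :
    ∏ s : Fin M, (if j s = n then 1 else 1 - t ^ (A - nonTop n M j s)) =
      fall t A (nonTop n M j M) := by
  have key : ∀ m, m ≤ M → ∏ s ∈ Finset.univ.filter (fun s : Fin M => (s : ℕ) < m),
      (if j s = n then 1 else 1 - t ^ (A - nonTop n M j s)) = fall t A (nonTop n M j m) := by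
    intro m hm
    induction m with
    | zero => simp [nonTop, fall]
    | succ m ih =>
      have e : Finset.univ.filter (fun s : Fin M => (s : ℕ) < m + 1) =
          insert ⟨m, hm⟩ (Finset.univ.filter (fun s : Fin M => (s : ℕ) < m)) := by
        ext s
        simp only [Finset.mem_filter, Finset.mem_univ, true_and, Finset.mem_insert, Fin.ext_iff]
        omega
      have h2 := nonTop_succ n M j ⟨m, hm⟩
      simp only at h2
      rw [e, Finset.prod_insert (by simp), ih (by omega), h2]
      by_cases h : j ⟨m, hm⟩ = n
      · simp [h]
      · simp only [h, if_false]
        rw [fall_succ, mul_comm]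
  simpa using key M le_rfl

/-- The product of the vertex weights along the column does not depend on the incoming word. -/
lemma Pprod_const (n c : ℕ) (hn : 1 ≤ n) (J I K : ℕ → ℕ)
    (hK : ∀ a, 1 ≤ a → a < n → K a = I a + J a)
    (hKn : (K n : ℤ) = (I n : ℤ) + (J n : ℤ) - (c : ℤ))
    (j : Fin c → ℕ) (hj : j ∈ wrd n c J) :
    Pprod tpowP n c j (fun _ => n) I K Polynomial.X =
      Polynomial.C ((RatFunc.X : RatFunc ℚ) ^ (c * (c - 1) / 2) *
        fall (RatFunc.X : RatFunc ℚ) (I n) (c - J n)) * Polynomial.X ^ c := by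
  obtain ⟨hjn, hjc⟩ := (mem_wrd n c J j).1 hj
  have hlast : ∀ a ∈ Finset.Icc 1 n, Istep c I j (fun _ => n) c a = (K a : ℤ) := by
    intro a ha
    rw [Istep_last, hjc a ha]
    obtain ⟨h1, h2⟩ := Finset.mem_Icc.1 ha
    by_cases h : a = n
    · subst h; simp [hKn]
    · rw [hK a h1 (by omega)]
      simp [Ne.symm h]
  have htop : (nonTop n c j c : ℤ) = c - J n := by
    have h1 := hlast n (Finset.mem_Icc.2 ⟨hn, le_rfl⟩)
    rw [Istep_top n c I j c le_rfl] at h1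
    omega
  have hle : ∀ s, s ≤ c → nonTop n c j s ≤ I n := by
    intro s hs
    have := nonTop_mono n c j hs
    omega
  have hnonneg : ∀ s ∈ Finset.range (c + 1), ∀ a ∈ Finset.Icc 1 n,
      0 ≤ Istep c I j (fun _ => n) s a := by
    intro s hs a ha
    have hs' : s ≤ c := Nat.lt_succ_iff.1 (Finset.mem_range.1 hs)
    by_cases h : a = n
    · subst h
      rw [Istep_top a c I j s hs']
      have := hle s hs'
      omega
    · refine add_nonneg (by positivity) (Finset.sum_nonneg fun r _ => ?_)
      simp only [h, if_false, sub_zero]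
      split_ifs <;> norm_num
  rw [Pprod, if_pos ⟨hnonneg, hlast⟩]
  have hw : ∀ s : Fin c, Lw tpowP n (Istep c I j (fun _ => n) s)
      (Istep c I j (fun _ => n) ((s : ℕ) + 1)) (j s) n (tpowP (s : ℕ) * Polynomial.X) =
      Polynomial.C ((RatFunc.X : RatFunc ℚ) ^ (s : ℕ) *
        (if j s = n then 1 else 1 - RatFunc.X ^ (I n - nonTop n c j s))) * Polynomial.X := by
    intro s
    have hsum : ∑ a ∈ Finset.Icc (n + 1) n, Istep c I j (fun _ => n) s a = 0 := by simp
    rw [Lw, if_pos (fun a _ => by rw [Istep_succ]; ring), if_neg (by omega), hsum]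
    by_cases h : j s = n
    · rw [if_pos h, if_pos h]
      simp [tpowP]
    · have hlt : j s < n := lt_of_le_of_ne (hjn s) h
      rw [if_neg h, if_pos hlt, if_neg h, Istep_top n c I j s s.is_lt.le,
        ← Nat.cast_sub (hle s s.is_lt.le)]
      simp only [tpowP, zpow_natCast, zpow_zero, map_one, mul_one, map_mul, map_sub]
      ring
  rw [Finset.prod_congr rfl fun s _ => hw s, Finset.prod_mul_distrib, ← map_prod,
    Finset.prod_mul_distrib, prod_nonTop, Finset.prod_const, Finset.card_univ, Fintype.card_fin,
    show nonTop n c j c = c - J n by omega,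
    Fin.prod_univ_eq_prod_range (fun i => (RatFunc.X : RatFunc ℚ) ^ i) c,
    Finset.prod_pow_eq_pow_sum, Finset.sum_range_id]

/-! ### The fused weight -/

theorem statement19 (n c : ℕ) (hn : 1 ≤ n) (hc : 1 ≤ c) (J I K : ℕ → ℕ)
    (hJ : ∑ a ∈ Finset.Icc 1 n, J a ≤ c)
    (hK : ∀ a, 1 ≤ a → a < n → K a = I a + J a)
    (hKn : (K n : ℤ) = (I n : ℤ) + (J n : ℤ) - (c : ℤ)) :
    Lfused n c J (fun a => if a = n then c else 0) I K Polynomial.X =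
        Polynomial.C ((RatFunc.X : RatFunc ℚ) ^ (c * (c - 1) / 2) *
            (pochh (RatFunc.X : RatFunc ℚ) RatFunc.X (c - J n) *
              gq (I n) ((c : ℤ) - (J n : ℤ)))) *
          Polynomial.X ^ c ∧
      Lfused n c J (fun a => if a = n then c else 0) I K Polynomial.X =
        Polynomial.C ((RatFunc.X : RatFunc ℚ) ^ (c * (c - 1) / 2) *
            (pochh (RatFunc.X : RatFunc ℚ) RatFunc.X (I n) /
              pochh (RatFunc.X : RatFunc ℚ) RatFunc.X (K n))) *
          Polynomial.X ^ c := by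
  have hJn : J n ≤ c :=
    (Finset.single_le_sum (f := J) (fun _ _ => Nat.zero_le _)
      (Finset.mem_Icc.2 ⟨hn, le_rfl⟩)).trans hJ
  have hL : Lfused n c J (fun a => if a = n then c else 0) I K Polynomial.X =
      Polynomial.C ((RatFunc.X : RatFunc ℚ) ^ (c * (c - 1) / 2) *
        fall (RatFunc.X : RatFunc ℚ) (I n) (c - J n)) * Polynomial.X ^ c := by
    rw [Lfused, wrd_last n c hn]
    simp only [Finset.sum_singleton]
    rw [Finset.sum_congr rfl fun j hj => by rw [Pprod_const n c hn J I K hK hKn j hj],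
      ← Finset.sum_mul, ← map_sum, ← mul_assoc, ← map_mul]
    change Polynomial.C ((CJq n c J)⁻¹ * CJq n c J) * _ = _
    rw [inv_mul_cancel₀ (CJq_ne_zero n c J (wrd_nonempty n c J hJ)), map_one, one_mul]
  have hg : pochh (RatFunc.X : RatFunc ℚ) RatFunc.X (c - J n) * gq (I n) ((c : ℤ) - (J n : ℤ)) =
      fall (RatFunc.X : RatFunc ℚ) (I n) (c - J n) := by
    have h := gaussNat_mul_pochh ((algebraMap (Polynomial ℚ) (RatFunc ℚ)).comp
      (Polynomial.mapRingHom (Int.castRingHom ℚ))) (I n) (c - J n)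
    simp only [RingHom.comp_apply, Polynomial.coe_mapRingHom, Polynomial.map_X,
      RatFunc.algebraMap_X] at h
    rw [← h, gq, gaussInt, if_pos (by omega), Int.toNat_natCast,
      show ((c : ℤ) - (J n : ℤ)).toNat = c - J n by omega]
  have hp : pochh (RatFunc.X : RatFunc ℚ) RatFunc.X (I n) /
      pochh (RatFunc.X : RatFunc ℚ) RatFunc.X (K n) =
      fall (RatFunc.X : RatFunc ℚ) (I n) (c - J n) := by
    rw [div_eq_iff (pochh_X_ne_zero _), show K n = I n - (c - J n) by omega,
      fall_mul_pochh _ _ _ (by omega)]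
  rw [hg, hp]
  exact ⟨hL, hL⟩
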